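/- arXiv:1010.5752 — 3 statements merged into one kernel-verified Lean document; each statement's English description precedes it below -/
import Mathlib

section
/- Let r, s : (0,1] → ℝ be continuous nets that are moderate, i.e., there exists N ∈ ℕ and ε₀ > 0 with |r(ε)| ≤ ε^{-N} and |s(ε)| ≤ ε^{-N} for ε < ε₀. Suppose the product net (r(ε)·s(ε)) is negligible (for all m ∈ ℕ, |r(ε)s(ε)| < ε^m for ε sufficiently small), and suppose neither r nor s is negligible. Then there exists a sequence (ε_j) in (0,1] with ε_j strictly decreasing to 0 such that for every m ∈ ℕ there is j₀ with |r(ε_j)| < ε_j^m and |s(ε_j)| < ε_j^m for all j ≥ j₀. -/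
/-!
At small `ε` the product bound forbids `|r ε|` and `|s ε|` from both being at least `ε ^ M`.
If for some `m` they were also never both below `ε ^ m` near `0`, then (for large `M`) at each small
`ε` exactly one of the two would be at least `ε ^ M`. Non-negligibility provides arbitrarily small
points where it is `r`, and others where it is `s`, so `|r| - |s|` changes sign and, by the
intermediate value theorem, vanishes at a small point, where exactly one is impossible. Hence
common small values exist at every order `m` arbitrarily near `0` (`exists_common_small`), and a
diagonal choice followed by extraction of a monotone subsequence gives the sequence.
-/

open Set Filter

noncomputable section

def Ioc01 : Set ℝ := Set.Ioc 0 1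

def Negligible (f : ℝ → ℝ) : Prop :=
  ∀ m : ℕ, ∃ ε₀ > (0:ℝ), ∀ ε ∈ Ioc01, ε < ε₀ → |f ε| < ε ^ m

lemma Negligible.exists_large {f : ℝ → ℝ} (hf : ¬ Negligible f) :
    ∃ m : ℕ, ∀ δ > (0:ℝ), ∃ x ∈ Ioc01, x < δ ∧ x ^ m ≤ |f x| := by
  unfold Negligible at hf
  push Not at hf
  exact hf

/-- The sign-change argument: `r` and `s` are simultaneously small, to any prescribed order,
at points arbitrarily close to `0`. -/
lemma exists_common_small {r s : ℝ → ℝ}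
    (hrc : ContinuousOn r Ioc01) (hsc : ContinuousOn s Ioc01)
    (hprod : Negligible (fun ε => r ε * s ε))
    (hr : ¬ Negligible r) (hs : ¬ Negligible s) (m : ℕ) {δ : ℝ} (hδ : 0 < δ) :
    ∃ x ∈ Ioc01, x < δ ∧ |r x| < x ^ m ∧ |s x| < x ^ m := by
  by_contra! hcon
  obtain ⟨m₁, h₁⟩ := Negligible.exists_large hr
  obtain ⟨m₂, h₂⟩ := Negligible.exists_large hs
  obtain ⟨M, hM, hM₁, hM₂⟩ : ∃ M, m ≤ M ∧ m₁ ≤ M ∧ m₂ ≤ M :=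
    ⟨m + m₁ + m₂, by omega, by omega, by omega⟩
  obtain ⟨η, hη, hp⟩ := hprod (M + M)
  have hpow : ∀ x ∈ Ioc01, ∀ k ≤ M, x ^ M ≤ x ^ k := fun x hx k hk =>
    pow_le_pow_of_le_one hx.1.le hx.2 hk
  have hnot : ∀ x ∈ Ioc01, x < η → x ^ M ≤ |r x| → |s x| < x ^ M := by
    intro x hx hxη hrx
    by_contra! hsx
    have h := hp x hx hxη
    rw [abs_mul, pow_add] at h
    exact h.not_ge (mul_le_mul hrx hsx (pow_nonneg hx.1.le _) (abs_nonneg _))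
  have hor : ∀ x ∈ Ioc01, x < δ → x ^ M ≤ |r x| ∨ x ^ M ≤ |s x| := by
    intro x hx hxδ
    rcases lt_or_ge (|r x|) (x ^ m) with h | h
    · exact Or.inr ((hpow x hx m hM).trans (hcon x hx hxδ h))
    · exact Or.inl ((hpow x hx m hM).trans h)
  obtain ⟨a, ha, haδ, hra⟩ := h₁ (min δ η) (lt_min hδ hη)
  obtain ⟨b, hb, hbδ, hsb⟩ := h₂ (min δ η) (lt_min hδ hη)
  have hsub : uIcc a b ⊆ Ioc01 := fun x hx =>
    ⟨(lt_min ha.1 hb.1).trans_le hx.1, hx.2.trans (max_le ha.2 hb.2)⟩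
  have hfa : 0 ≤ |r a| - |s a| := by
    have h := (hpow a ha m₁ hM₁).trans hra
    linarith [hnot a ha (haδ.trans_le (min_le_right _ _)) h]
  have hfb : |r b| - |s b| ≤ 0 := by
    have h := (hpow b hb m₂ hM₂).trans hsb
    by_contra! hlt
    exact (hnot b hb (hbδ.trans_le (min_le_right _ _)) (by linarith)).not_ge h
  have hcont : ContinuousOn (fun x => |r x| - |s x|) (uIcc a b) :=
    (hrc.mono hsub).abs.sub (hsc.mono hsub).abs
  obtain ⟨c, hc, hc0⟩ := intermediate_value_uIcc hcont (mem_uIcc.2 (Or.inr ⟨hfb, hfa⟩))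
  have hc' : c < min δ η := hc.2.trans_lt (max_lt haδ hbδ)
  have heq : |r c| = |s c| := sub_eq_zero.1 hc0
  have hrc' : c ^ M ≤ |r c| := by
    rcases hor c (hsub hc) (hc'.trans_le (min_le_left _ _)) with h | h
    · exact h
    · exact heq ▸ h
  have := hnot c (hsub hc) (hc'.trans_le (min_le_right _ _)) hrc'
  linarith

/-- Two non-negligible continuous moderate nets with negligible product vanish
(in the negligibility sense) along a common strictly decreasing sequence tending to 0. -/
theorem stmt2 (r s : ℝ → ℝ)
    (hrc : ContinuousOn r Ioc01) (hsc : ContinuousOn s Ioc01)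
    (hmod : ∃ N : ℕ, ∃ ε₀ > (0:ℝ), ∀ ε ∈ Ioc01, ε < ε₀ →
      |r ε| ≤ ε⁻¹ ^ N ∧ |s ε| ≤ ε⁻¹ ^ N)
    (hprod : Negligible (fun ε => r ε * s ε))
    (hr : ¬ Negligible r) (hs : ¬ Negligible s) :
    ∃ e : ℕ → ℝ, StrictAnti e ∧ (∀ j, e j ∈ Ioc01) ∧
      Tendsto e atTop (nhds 0) ∧
      ∀ m : ℕ, ∃ j₀ : ℕ, ∀ j ≥ j₀, |r (e j)| < e j ^ m ∧ |s (e j)| < e j ^ m := by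
  have key : ∀ n : ℕ, ∃ x ∈ Ioc01, x < 1 / ((n : ℝ) + 1) ∧ |r x| < x ^ n ∧ |s x| < x ^ n :=
    fun n => exists_common_small hrc hsc hprod hr hs n Nat.one_div_pos_of_nat
  choose u hu hlt hru hsu using key
  have hu0 : Tendsto u atTop (nhds 0) :=
    squeeze_zero (fun n => (hu n).1.le) (fun n => (hlt n).le) tendsto_one_div_add_atTop_nhds_zero_nat
  -- The reciprocals tend to infinity, so they have a strictly increasing subsequence.
  have hinv : Tendsto (fun n => (u n)⁻¹) atTop atTop :=
    tendsto_inv_nhdsGT_zero.comp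
      (tendsto_nhdsWithin_iff.2 ⟨hu0, Eventually.of_forall fun n => (hu n).1⟩)
  obtain ⟨φ, hφ, hφu⟩ := strictMono_subseq_of_tendsto_atTop hinv
  refine ⟨u ∘ φ, fun i j hij => ?_, fun j => hu _, hu0.comp hφ.tendsto_atTop, fun m => ⟨m, ?_⟩⟩
  · exact (inv_lt_inv₀ (hu _).1 (hu _).1).1 (hφu hij)
  · intro j hj
    have hpow : u (φ j) ^ φ j ≤ u (φ j) ^ m :=
      pow_le_pow_of_le_one (hu _).1.le (hu _).2 (hj.trans (hφ.id_le j))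
    exact ⟨(hru _).trans_le hpow, (hsu _).trans_le hpow⟩
end
end

section
/- Let r : (0,1] → ℝ be a continuous moderate net (|r(ε)| ≤ ε^{-N} for some N and small ε) which is not strictly nonzero, i.e., for every m ∈ ℕ and every ε₀ > 0 there exists ε < ε₀ with |r(ε)| < ε^m. Then there exists a smooth net s : (0,1] → ℝ with 0 ≤ s ≤ 1 such that s is not negligible (in fact s(ε_j) = 1 along some sequence ε_j → 0), and the product net (r(ε)·s(ε)) is negligible. -/
/-! After the substitution `x = ε⁻¹`, the interval `(0,1]` becomes `[1,∞)` and the singular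
endpoint `0` moves off to infinity, so a single application of the smooth Urysohn lemma on `ℝ`
replaces an infinite sum of bump functions.

Choose `e j < 1/(j+2)` with `|r (e j)| < (e j)^j`. The points `(e j)⁻¹` tend to infinity, hence
form a closed set. Continuity of `r` makes
`V j = {x > 1 | x < (e j)⁻¹ + 1, |r x⁻¹| < (x⁻¹)^j}` an open neighbourhood of `(e j)⁻¹`. Let `f` be
smooth with values in `[0,1]`, equal to `1` at all `(e j)⁻¹` and `0` off `⋃ j, V j`, and put
`s ε = f ε⁻¹`. Since every `V j` is bounded, for each `m` a sufficiently small `ε` can satisfy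
`ε⁻¹ ∈ V j` only for `j ≥ m`, and then `|r ε * s ε| ≤ |r ε| < ε^j ≤ ε^m`. -/

open Set Filter

noncomputable section

def Moderate (f : ℝ → ℝ) : Prop :=
  ∃ N : ℕ, ∃ ε₀ > (0:ℝ), ∀ ε ∈ Ioc01, ε < ε₀ → |f ε| ≤ ε⁻¹ ^ N

/-- Smooth Urysohn lemma on `ℝ`, for a closed set inside an open one. -/
lemma exists_smooth_urysohn {T U : Set ℝ} (hT : IsClosed T) (hU : IsOpen U) (hTU : T ⊆ U) :
    ∃ f : ℝ → ℝ, ContDiff ℝ (⊤ : ℕ∞) f ∧ (∀ x, x ∉ U → f x = 0) ∧ (∀ x ∈ T, f x = 1) ∧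
      ∀ x, 0 ≤ f x ∧ f x ≤ 1 := by
  obtain ⟨f, h0, h1, hf⟩ := exists_contMDiffMap_zero_one_of_isClosed (n := (⊤ : ℕ∞))
    (modelWithCornersSelf ℝ ℝ) hU.isClosed_compl hT
    (Set.disjoint_left.2 fun x hx hxT => hx (hTU hxT))
  exact ⟨f, f.contMDiff.contDiff, fun x hx => h0 hx, fun x hx => h1 hx, fun x => hf x⟩

lemma isClosed_range_of_tendsto_atTop {u : ℕ → ℝ} (hu : Tendsto u atTop atTop) :
    IsClosed (Set.range u) := by
  refine (isProperMap_iff_tendsto_cocompact.2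
    ⟨continuous_of_discreteTopology, ?_⟩).isClosedMap.isClosed_range
  rw [Filter.cocompact_eq_cofinite, Nat.cofinite_eq_atTop]
  exact hu.mono_right atTop_le_cocompact

/-- The set where `r`, read in the variable `x = ε⁻¹`, is smaller than `ε^j` is open: the strict
inequality `1 < x` keeps `x⁻¹` away from the endpoint `1`, where `r` is only one-sidedly
continuous. -/
lemma isOpen_small {r : ℝ → ℝ} (hrc : ContinuousOn r Ioc01) (j : ℕ) (c : ℝ) :
    IsOpen {x : ℝ | 1 < x ∧ x < c ∧ |r x⁻¹| < x⁻¹ ^ j} := by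
  have hinv : ContinuousOn (fun x : ℝ => x⁻¹) (Ioo 1 c) :=
    continuousOn_inv₀.mono fun x hx => (zero_lt_one.trans hx.1).ne'
  have hr : ContinuousOn (fun x : ℝ => r x⁻¹) (Ioo 1 c) :=
    hrc.comp hinv fun x hx =>
      ⟨inv_pos.2 (zero_lt_one.trans hx.1), inv_le_one_of_one_le₀ hx.1.le⟩
  have h := ((hinv.pow j).sub hr.abs).isOpen_inter_preimage isOpen_Ioo isOpen_Ioi (t := Ioi 0)
  convert h using 1
  ext x
  simp [and_assoc]

/-- A continuous moderate net that is not strictly nonzero is annihilated by a smooth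
net with values in [0,1] taking the value 1 along a sequence tending to 0. -/
theorem stmt3 (r : ℝ → ℝ) (hrc : ContinuousOn r Ioc01) (hrm : Moderate r)
    (hns : ∀ m : ℕ, ∀ ε₀ > (0:ℝ), ∃ ε ∈ Ioc01, ε < ε₀ ∧ |r ε| < ε ^ m) :
    ∃ s : ℝ → ℝ, ContDiffOn ℝ (⊤ : ℕ∞) s Ioc01 ∧
      (∀ ε ∈ Ioc01, 0 ≤ s ε ∧ s ε ≤ 1) ∧
      ¬ Negligible s ∧
      (∃ e : ℕ → ℝ, (∀ j, e j ∈ Ioc01 ∧ s (e j) = 1) ∧ Tendsto e atTop (nhds 0)) ∧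
      Negligible (fun ε => r ε * s ε) := by
  choose e he hlt hr using fun j : ℕ => hns j (1 / ((j : ℝ) + 2)) (by positivity)
  have hpos : ∀ j, 0 < e j := fun j => (he j).1
  have hinv : ∀ j : ℕ, (j : ℝ) + 2 < (e j)⁻¹ := fun j => by
    have := hlt j
    rw [one_div] at this
    exact (lt_inv_comm₀ (hpos j) (by positivity)).1 this
  have htop : Tendsto (fun j => (e j)⁻¹) atTop atTop :=
    tendsto_atTop_mono (fun j => by linarith [hinv j]) tendsto_natCast_atTop_atTop
  have hlim : Tendsto e atTop (nhds 0) := by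
    simpa [Pi.inv_def] using htop.inv_tendsto_atTop
  let V : ℕ → Set ℝ := fun j => {x | 1 < x ∧ x < (e j)⁻¹ + 1 ∧ |r x⁻¹| < x⁻¹ ^ j}
  obtain ⟨f, hf, hf0, hf1, hf01⟩ := exists_smooth_urysohn (U := ⋃ j, V j)
    (isClosed_range_of_tendsto_atTop htop)
    (isOpen_iUnion fun j => isOpen_small hrc j _) (by
      rintro _ ⟨j, rfl⟩
      refine mem_iUnion.2 ⟨j, ?_, by simp, by simpa using hr j⟩
      have : (0 : ℝ) ≤ j := j.cast_nonneg
      linarith [hinv j])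
  have hs1 : ∀ j, f (e j)⁻¹ = 1 := fun j => hf1 _ ⟨j, rfl⟩
  refine ⟨fun ε => f ε⁻¹, ?_, fun ε _ => hf01 _, ?_, ⟨e, fun j => ⟨he j, hs1 j⟩, hlim⟩, ?_⟩
  · exact hf.comp_contDiffOn (contDiffOn_id.inv fun x hx => hx.1.ne')
  · intro hneg
    obtain ⟨ε₀, h₀, h⟩ := hneg 0
    obtain ⟨j, hj⟩ := (hlim.eventually (gt_mem_nhds h₀)).exists
    have := h (e j) (he j) hj
    simp [hs1 j] at this
  · intro m
    -- A common bound for the finitely many sets `V j` with `j < m`.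
    obtain ⟨C, hC⟩ := ((Set.finite_Iio m).image fun j => (e j)⁻¹ + 1).bddAbove
    refine ⟨(max C 1)⁻¹, by positivity, fun ε hε hlt' => ?_⟩
    have hCε : C < ε⁻¹ :=
      (le_max_left C 1).trans_lt ((lt_inv_comm₀ hε.1 (by positivity)).1 hlt')
    by_cases hU : ε⁻¹ ∈ ⋃ j, V j
    · obtain ⟨j, -, hjC, hj⟩ := mem_iUnion.1 hU
      rw [inv_inv] at hj
      have hmj : m ≤ j := by
        by_contra! hjm
        have : (e j)⁻¹ + 1 ≤ C := hC ⟨j, hjm, rfl⟩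
        linarith
      calc |r ε * f ε⁻¹| = |r ε| * f ε⁻¹ := by rw [abs_mul, abs_of_nonneg (hf01 _).1]
        _ ≤ |r ε| := mul_le_of_le_one_right (abs_nonneg _) (hf01 _).2
        _ < ε ^ j := hj
        _ ≤ ε ^ m := pow_le_pow_of_le_one hε.1.le hε.2 hmj
    · simpa [hf0 _ hU] using pow_pos hε.1 m
end
end

section
/- Let r, s : (0,1] → ℝ be continuous moderate nets such that the product (r(ε)s(ε)) is negligible. Then there exists a smooth net x : (0,1] → ℝ with 0 ≤ x(ε) ≤ 1 for all ε, such that both (r(ε)·x(ε)) and (s(ε)·(1 - x(ε))) are negligible. -/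
/-!
Fix the positive negligible gauge `η ε = ε ^ (1 / ε)`. A smooth `x` with values in `[0, 1]` is
chosen that vanishes where `|r| ≥ |s| + η` and equals `1` where `|s| ≥ |r| + η`
(`exists_smooth_separation`). These are disjoint closed conditions, so each point has a
neighbourhood on which one of the constants `0`, `1` is admissible, and a smooth partition of unity
glues these constants. Where `x ≠ 0` one has `|r| < |s| + η`, so multiplying by `|r|` gives
`r² ≤ |r s| + η |r|`; hence either `|r| ≤ 2 η` or `r² ≤ 2 |r s|`, and both bounds are negligible
(`negligible_mul_of_dominated`). The estimate for `s (1 - x)` is the same with the roles of `r` and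
`s` exchanged.
-/

open Set

noncomputable section

/-- Smooth Urysohn-type separation on `(0, 1]` of the regions where `|r|` and `|s|` dominate by the
margin `η`. The partition of unity is taken on all of `ℝ` after the substitution `ε = exp t`. -/
theorem exists_smooth_separation (r s η : ℝ → ℝ)
    (hr : ContinuousOn r Ioc01) (hs : ContinuousOn s Ioc01) (hη : ContinuousOn η Ioc01)
    (hpos : ∀ ε ∈ Ioc01, 0 < η ε) :
    ∃ x : ℝ → ℝ, ContDiffOn ℝ (⊤ : ℕ∞) x Ioc01 ∧
      (∀ ε ∈ Ioc01, 0 ≤ x ε ∧ x ε ≤ 1) ∧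
      (∀ ε ∈ Ioc01, |s ε| + η ε ≤ |r ε| → x ε = 0) ∧
      (∀ ε ∈ Ioc01, |r ε| + η ε ≤ |s ε| → x ε = 1) := by
  -- Truncation at `1` extends the nets constantly beyond the closed end point of `(0, 1]`.
  let E : ℝ → ℝ := fun t => min (Real.exp t) 1
  have hE : Continuous E := by fun_prop
  have hEm : ∀ t, E t ∈ Ioc01 := fun t => ⟨lt_min (Real.exp_pos t) one_pos, min_le_right _ _⟩
  have hR : Continuous (fun t => r (E t)) := hr.comp_continuous hE hEm
  have hS : Continuous (fun t => s (E t)) := hs.comp_continuous hE hEm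
  have hH : Continuous (fun t => η (E t)) := hη.comp_continuous hE hEm
  let T : ℝ → Set ℝ := fun t => {c | (0 ≤ c ∧ c ≤ 1) ∧
    (|s (E t)| + η (E t) ≤ |r (E t)| → c = 0) ∧ (|r (E t)| + η (E t) ≤ |s (E t)| → c = 1)}
  have hT : ∀ t, Convex ℝ (T t) := by
    rintro t c ⟨⟨c0, c1⟩, c2, c3⟩ d ⟨⟨d0, d1⟩, d2, d3⟩ a b ha hb hab
    simp only [smul_eq_mul]
    refine ⟨⟨by positivity, by nlinarith⟩, fun h => ?_, fun h => ?_⟩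
    · rw [c2 h, d2 h]; simp
    · rw [c3 h, d3 h]; simpa using hab
  have hloc : ∀ t : ℝ, ∃ c : ℝ, ∀ᶠ y in nhds t, c ∈ T y := by
    intro t
    have hp := hpos (E t) (hEm t)
    by_cases h : |s (E t)| + η (E t) ≤ |r (E t)|
    · refine ⟨0, ?_⟩
      have : ∀ᶠ y in nhds t, |s (E y)| < |r (E y)| + η (E y) :=
        hS.abs.continuousAt.eventually_lt (hR.abs.add hH).continuousAt (by linarith)
      filter_upwards [this] with y hy
      exact ⟨⟨le_rfl, zero_le_one⟩, fun _ => rfl, fun h' => absurd hy (not_lt.2 h')⟩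
    · refine ⟨1, ?_⟩
      have : ∀ᶠ y in nhds t, |r (E y)| < |s (E y)| + η (E y) :=
        hR.abs.continuousAt.eventually_lt (hS.abs.add hH).continuousAt (not_le.1 h)
      filter_upwards [this] with y hy
      exact ⟨⟨zero_le_one, le_rfl⟩, fun h' => absurd hy (not_lt.2 h'), fun _ => rfl⟩
  obtain ⟨g, hg⟩ := exists_contMDiffMap_forall_mem_convex_of_local_const
    (n := (⊤ : ℕ∞)) (modelWithCornersSelf ℝ ℝ) hT hloc
  have hEl : ∀ ε ∈ Ioc01, E (Real.log ε) = ε := fun ε hε => by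
    simp only [E, Real.exp_log hε.1, min_eq_left hε.2]
  refine ⟨fun ε => g (Real.log ε), ?_, ?_, ?_, ?_⟩
  · exact g.contMDiff.contDiff.comp_contDiffOn
      (Real.contDiffOn_log.mono fun ε hε => ne_of_gt hε.1)
  · exact fun ε _ => (hg _).1
  · intro ε hε h
    have := (hg (Real.log ε)).2.1
    rw [hEl ε hε] at this
    exact this h
  · intro ε hε h
    have := (hg (Real.log ε)).2.2
    rw [hEl ε hε] at this
    exact this h

theorem negligible_rpow_inv : Negligible (fun ε => ε ^ (ε⁻¹ : ℝ)) := by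
  intro m
  refine ⟨((m : ℝ) + 1)⁻¹, by positivity, fun ε hε h => ?_⟩
  have h0 : 0 < ε := hε.1
  have hm : (m : ℝ) + 1 < ε⁻¹ := (lt_inv_comm₀ h0 (by positivity)).1 h
  have h1 : ε < 1 := by
    refine h.trans_le (inv_le_one_of_one_le₀ ?_)
    linarith [Nat.cast_nonneg (α := ℝ) m]
  rw [abs_of_nonneg (Real.rpow_nonneg h0.le _), ← Real.rpow_natCast]
  exact Real.rpow_lt_rpow_of_exponent_gt h0 h1 (by linarith)

/-- If `|r| < |s| + η` wherever the weight `w` is nonzero, then `r² ≤ |r s| + η |r|` there, which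
bounds `r w` by a negligible quantity. -/
theorem negligible_mul_of_dominated (r s η w : ℝ → ℝ)
    (hη : Negligible η) (hprod : Negligible (fun ε => r ε * s ε))
    (hw : ∀ ε ∈ Ioc01, 0 ≤ w ε ∧ w ε ≤ 1)
    (hdom : ∀ ε ∈ Ioc01, |s ε| + η ε ≤ |r ε| → w ε = 0) :
    Negligible (fun ε => r ε * w ε) := by
  intro m
  -- The extra powers of `ε` absorb the factors `2` in `|r| ≤ 2 η` and `r² ≤ 2 |r s|`.
  obtain ⟨a, ha, hA⟩ := hη (m + 1)
  obtain ⟨b, hb, hB⟩ := hprod (2 * m + 1)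
  refine ⟨min (min a b) (1 / 2), by positivity, fun ε hε h => ?_⟩
  have h0 : 0 < ε := hε.1
  have h2 : ε < 1 / 2 := h.trans_le (min_le_right _ _)
  have hab : ε < min a b := h.trans_le (min_le_left _ _)
  have hA := (le_abs_self _).trans_lt (hA ε hε (hab.trans_le (min_le_left _ _)))
  have hB := hB ε hε (hab.trans_le (min_le_right _ _))
  have hp : 0 < ε ^ m := pow_pos h0 m
  obtain ⟨w0, w1⟩ := hw ε hε
  by_cases hd : |s ε| + η ε ≤ |r ε|
  · simpa [hdom ε hε hd] using hp
  · have hd := not_le.1 hd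
    suffices hr : |r ε| < ε ^ m by
      change |r ε * w ε| < ε ^ m
      rw [abs_mul, abs_of_nonneg w0]
      exact (mul_le_of_le_one_right (abs_nonneg _) w1).trans_lt hr
    by_contra! hr
    have e1 : ε ^ (m + 1) = ε ^ m * ε := pow_succ _ _
    have e2 : ε ^ (2 * m + 1) = ε ^ m * ε ^ m * ε := by ring
    rw [abs_mul, e2] at hB
    rw [e1] at hA
    have hη2 : 2 * η ε < |r ε| := by nlinarith
    have hrs : |r ε| < 2 * |s ε| := by linarith
    have hr0 : 0 < |r ε| := hp.trans_le hr
    have h3 : |r ε| * |r ε| < 2 * (|r ε| * |s ε|) := by nlinarith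
    have h4 : ε ^ m * ε ^ m ≤ |r ε| * |r ε| := mul_self_le_mul_self hp.le hr
    have h5 : ε ^ m * ε ^ m * ε < ε ^ m * ε ^ m * (1 / 2) :=
      mul_lt_mul_of_pos_left h2 (mul_pos hp hp)
    linarith

/-- If the product of two continuous moderate nets is negligible, there is a smooth
net x with values in [0,1] such that r·x and s·(1-x) are negligible. -/
theorem stmt10 (r s : ℝ → ℝ)
    (hrc : ContinuousOn r Ioc01) (hsc : ContinuousOn s Ioc01)
    (hrm : Moderate r) (hsm : Moderate s)
    (hprod : Negligible (fun ε => r ε * s ε)) :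
    ∃ x : ℝ → ℝ, ContDiffOn ℝ (⊤ : ℕ∞) x Ioc01 ∧
      (∀ ε ∈ Ioc01, 0 ≤ x ε ∧ x ε ≤ 1) ∧
      Negligible (fun ε => r ε * x ε) ∧
      Negligible (fun ε => s ε * (1 - x ε)) := by
  have hc : ContinuousOn (fun ε : ℝ => ε ^ (ε⁻¹ : ℝ)) Ioc01 :=
    continuousOn_id.rpow (continuousOn_id.inv₀ fun ε hε => ne_of_gt hε.1)
      fun ε hε => Or.inl (ne_of_gt hε.1)
  obtain ⟨x, hx, hx01, hx0, hx1⟩ := exists_smooth_separation r s _ hrc hsc hc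
    fun ε hε => Real.rpow_pos_of_pos hε.1 _
  refine ⟨x, hx, hx01, ?_, ?_⟩
  · exact negligible_mul_of_dominated r s _ x negligible_rpow_inv hprod hx01 hx0
  · refine negligible_mul_of_dominated s r _ (fun ε => 1 - x ε) negligible_rpow_inv ?_ ?_ ?_
    · simpa only [mul_comm] using hprod
    · exact fun ε hε => ⟨sub_nonneg.2 (hx01 ε hε).2, sub_le_self _ (hx01 ε hε).1⟩
    · exact fun ε hε h => sub_eq_zero.2 (hx1 ε hε h).symm
end
end
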